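/- arXiv:1507.01397 — 2 statements merged into one kernel-verified Lean document; each statement's English description precedes it below -/
import Mathlib

section
/- Let p ≥ 1, β₀ ∈ ℝ^p, and let α₀ : ℝ → [0,∞) be measurable with A₀(t) = ∫₀^t α₀(s) ds finite for every t ≥ 0 and A₀(t) → ∞ as t → ∞. Let ν be a probability measure on ℝ^p, let κ_T be the Markov kernel from ℝ^p to ℝ for which κ_T(z) has Lebesgue density t ↦ 1_{t≥0} α₀(t) e^{β₀·z} exp(−A₀(t) e^{β₀·z}), and let κ_C be any Markov kernel from ℝ^p to [0,∞). Let (Z, T, C) have the joint law in which Z ∼ ν and, given Z = z, T and C are independent with respective laws κ_T(z) and κ_C(z) (the composition of ν with the product kernel κ_T × κ_C). Set X = min(T, C), δ = 1_{T ≤ C}, and S(u, β₀) = E[e^{β₀·Z} 1_{X ≥ u}]. Then for every bounded measurable g : ℝ → ℝ, E[δ · g(X)] = ∫₀^∞ g(u) α₀(u) S(u, β₀) du. -/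
open MeasureTheory ProbabilityTheory
open scoped ProbabilityTheory

/-!
Write `e z = exp (β₀·z)`. Both sides of the identity are integrals of `g` against a measure on `ℝ`:
the left-hand side against the law `M` of `X` restricted to the uncensored event `{T ≤ C}`, the
right-hand side against `α₀ u * S u du` on `(0, ∞)`. So it is enough to show that
these two measures agree on every measurable set `s`, which only involves nonnegative integrals.

By conditional independence, `M s = ∫ ∫_s P(C ≥ t | z) κT(z)(dt) ν(dz)` and
`S u = ∫ e z * P(T ≥ u | z) * P(C ≥ u | z) ν(dz)`. The two are matched by Tonelli's theorem
and the survival function `P(T ≥ u | z) = exp (-(A₀ u * e z))` (`survival_cox`), which turns the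
density of `κT z` into `α₀ u * e z * P(T ≥ u | z)`. As `α₀` is merely measurable, the survival
function is obtained from the fundamental theorem of calculus for absolutely continuous functions
(`integral_hazard_mul_exp`).

The expectation `S u` may be infinite for small `u`, in which case the Bochner integral
takes the value `0`. Since the total mass of `M` is at most one, `α₀ u * S u` is finite for almost
every `u`, hence such `u` have `α₀ u = 0` up to a null set and do not contribute.
-/

lemma abs_exp_neg_sub_exp_neg_le {a b : ℝ} (ha : 0 ≤ a) (hb : 0 ≤ b) :
    |Real.exp (-a) - Real.exp (-b)| ≤ |a - b| := by
  wlog hab : a ≤ b generalizing a b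
  · rw [abs_sub_comm, abs_sub_comm a]
    exact this hb ha (le_of_not_ge hab)
  have h1 : Real.exp (-b) ≤ Real.exp (-a) := Real.exp_le_exp.2 (by linarith)
  rw [abs_of_nonneg (by linarith), abs_of_nonpos (by linarith)]
  have h2 : Real.exp (-b) = Real.exp (-a) * Real.exp (-(b - a)) := by
    rw [← Real.exp_add]; ring_nf
  have h3 := Real.add_one_le_exp (-(b - a))
  have h4 : Real.exp (-a) ≤ 1 := Real.exp_le_one_iff.2 (by linarith)
  have h5 := Real.exp_pos (-a)
  rw [h2]
  nlinarith

/-- The distribution function attached to the hazard `c * α`, where `A` is the cumulative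
integral of `α`. The function `t ↦ exp (-(A t * c))` is absolutely continuous, and its derivative
is almost everywhere minus the integrand. -/
lemma integral_hazard_mul_exp {α A : ℝ → ℝ} (hα : ∀ t, 0 ≤ α t)
    (hint : ∀ t : ℝ, 0 ≤ t → IntegrableOn α (Set.Ioc 0 t))
    (hA : ∀ t, A t = ∫ s in Set.Ioc (0:ℝ) t, α s) {c : ℝ} (hc : 0 < c) {u : ℝ} (hu : 0 ≤ u) :
    ∫ t in (0:ℝ)..u, α t * c * Real.exp (-(A t * c)) = 1 - Real.exp (-(A u * c)) := by
  have hA0 : ∀ t, 0 ≤ A t := fun t => by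
    rw [hA]; exact integral_nonneg hα
  -- Extending `α` by zero to the left makes `A` an interval integral on the whole line.
  set a : ℝ → ℝ := (Set.Ioi (0:ℝ)).indicator α with ha
  have hAa : A = fun t => ∫ s in (0:ℝ)..t, a s := by
    funext t
    rw [hA]
    rcases le_total 0 t with ht | ht
    · rw [intervalIntegral.integral_of_le ht]
      refine setIntegral_congr_fun measurableSet_Ioc fun s hs => ?_
      simp [ha, Set.indicator_of_mem (show s ∈ Set.Ioi (0:ℝ) from hs.1)]
    · rw [intervalIntegral.integral_of_ge ht, Set.Ioc_eq_empty (by simpa using ht)]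
      rw [setIntegral_congr_fun (g := fun _ => (0:ℝ)) measurableSet_Ioc fun s hs => by
        simp [ha, hs.2]]
      simp
  have hia : IntervalIntegrable a volume 0 u := by
    rw [intervalIntegrable_iff_integrableOn_Ioc_of_le hu]
    exact (hint u hu).indicator measurableSet_Ioi
  have hAC : AbsolutelyContinuousOnInterval A 0 u := by
    rw [hAa]
    exact hia.absolutelyContinuousOnInterval_intervalIntegral (by simp)
  have hEC : AbsolutelyContinuousOnInterval (fun t => Real.exp (-(A t * c))) 0 u := by
    have := hAC.const_mul c
    refine squeeze_zero (fun t => ?_) (fun t => ?_) this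
    · exact Finset.sum_nonneg fun i _ => dist_nonneg
    · refine Finset.sum_le_sum fun i _ => ?_
      simp only [Real.dist_eq]
      rw [mul_comm c, mul_comm c]
      exact abs_exp_neg_sub_exp_neg_le (mul_nonneg (hA0 _) hc.le) (mul_nonneg (hA0 _) hc.le)
  have hF := hEC.integral_deriv_eq_sub
  have hA00 : A 0 = 0 := by rw [hA]; simp
  have : ∫ t in (0:ℝ)..u, α t * c * Real.exp (-(A t * c))
      = ∫ t in (0:ℝ)..u, -deriv (fun t => Real.exp (-(A t * c))) t := by
    refine intervalIntegral.integral_congr_ae ?_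
    filter_upwards [hia.ae_hasDerivAt_integral] with x hx hxu
    have hd : HasDerivAt A (a x) x := by
      rw [hAa]
      exact hx (Set.uIoc_subset_uIcc hxu) 0 (by simp)
    have hax : a x = α x := by
      rw [Set.uIoc_of_le hu] at hxu
      simp [ha, Set.indicator_of_mem (show x ∈ Set.Ioi (0:ℝ) from hxu.1)]
    rw [hax] at hd
    have hd' : HasDerivAt (fun t => Real.exp (-(A t * c)))
        (Real.exp (-(A x * c)) * -(α x * c)) x := (hd.mul_const c).neg.exp
    rw [hd'.deriv]
    ring
  rw [this, intervalIntegral.integral_neg, hF, hA00]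
  simp

/-- The survival function of a probability measure `μ` with hazard `c * α` is
`u ↦ exp (-(A u * c))` on `[0, ∞)`, where `A` is the cumulative integral of `α`. -/
lemma survival_cox {α A : ℝ → ℝ} (hα : ∀ t, 0 ≤ α t) (hm : Measurable α)
    (hint : ∀ t : ℝ, 0 ≤ t → IntegrableOn α (Set.Ioc 0 t))
    (hA : ∀ t, A t = ∫ s in Set.Ioc (0:ℝ) t, α s) (hAm : Measurable A) {c : ℝ} (hc : 0 < c)
    {μ : Measure ℝ} [IsProbabilityMeasure μ]
    (hμ : μ = volume.withDensity (fun t => ENNReal.ofReal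
      (if 0 ≤ t then α t * c * Real.exp (-(A t * c)) else 0)))
    {u : ℝ} (hu : 0 ≤ u) : μ (Set.Ici u) = ENNReal.ofReal (Real.exp (-(A u * c))) := by
  have hA0 : ∀ t, 0 ≤ A t := fun t => by
    rw [hA]; exact integral_nonneg hα
  have hle : Real.exp (-(A u * c)) ≤ 1 :=
    Real.exp_le_one_iff.2 (by have := mul_nonneg (hA0 u) hc.le; linarith)
  have hII : IntegrableOn (fun t => α t * c * Real.exp (-(A t * c))) (Set.Ioc 0 u) := by
    refine Integrable.mono' ((hint u hu).mul_const c) (by fun_prop) ?_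
    refine Filter.Eventually.of_forall fun t => ?_
    have h1 : 0 ≤ α t * c := mul_nonneg (hα t) hc.le
    rw [Real.norm_of_nonneg (mul_nonneg h1 (Real.exp_pos _).le)]
    refine mul_le_of_le_one_right h1 (Real.exp_le_one_iff.2 ?_)
    have := mul_nonneg (hA0 t) hc.le
    linarith
  have hIio : μ (Set.Iio u) = ENNReal.ofReal (1 - Real.exp (-(A u * c))) := by
    rw [← integral_hazard_mul_exp hα hint hA hc hu, intervalIntegral.integral_of_le hu,
      ofReal_integral_eq_lintegral_ofReal hII (Filter.Eventually.of_forall fun t =>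
        mul_nonneg (mul_nonneg (hα t) hc.le) (Real.exp_pos _).le),
      hμ, withDensity_apply _ measurableSet_Iio, ← lintegral_indicator measurableSet_Iio,
      setLIntegral_congr Ico_ae_eq_Ioc.symm, ← lintegral_indicator measurableSet_Ico]
    congr 1
    funext t
    by_cases h1 : t < u <;> by_cases h2 : 0 ≤ t <;> simp [Set.indicator, h1, h2]
  rw [← Set.compl_Iio, prob_compl_eq_one_sub measurableSet_Iio, hIio, ← ENNReal.ofReal_one,
    ← ENNReal.ofReal_sub _ (by linarith)]
  congr 1
  ring

/-- Aalen multiplicative-intensity identity in the Cox right-censoring model with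
covariates: if, given `Z = z`, the survival time `T` has hazard `α₀(t) e^{β₀·z}` and
the censoring time `C ≥ 0` is conditionally independent of `T`, then with
`X = min(T, C)`, `δ = 1_{T ≤ C}` and `S(u, β₀) = E[e^{β₀·Z} 1_{X ≥ u}]`, for every
bounded measurable `g`, `E[δ g(X)] = ∫₀^∞ g(u) α₀(u) S(u, β₀) du`. -/
theorem compensator_identity_cox
    (p : ℕ) (hp : 1 ≤ p) (β₀ : Fin p → ℝ)
    (α₀ : ℝ → ℝ) (hα₀nn : ∀ t, 0 ≤ α₀ t) (hα₀meas : Measurable α₀)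
    (hα₀int : ∀ t : ℝ, 0 ≤ t → IntegrableOn α₀ (Set.Ioc 0 t))
    (A₀ : ℝ → ℝ) (hA₀ : ∀ t, A₀ t = ∫ s in Set.Ioc (0:ℝ) t, α₀ s)
    (hA₀top : Filter.Tendsto A₀ Filter.atTop Filter.atTop)
    (ν : Measure (Fin p → ℝ)) [IsProbabilityMeasure ν]
    (κT κC : Kernel (Fin p → ℝ) ℝ) [IsMarkovKernel κT] [IsMarkovKernel κC]
    (hκT : ∀ z, κT z = volume.withDensity (fun t => ENNReal.ofReal
      (if 0 ≤ t then α₀ t * Real.exp (∑ j, β₀ j * z j)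
        * Real.exp (-(A₀ t * Real.exp (∑ j, β₀ j * z j))) else 0)))
    (hκC : ∀ z, κC z (Set.Iio 0) = 0)
    (Ω : Type*) [MeasurableSpace Ω] (P : Measure Ω) [IsProbabilityMeasure P]
    (Z : Ω → Fin p → ℝ) (T C : Ω → ℝ)
    (hZmeas : Measurable Z) (hTmeas : Measurable T) (hCmeas : Measurable C)
    (hlaw : Measure.map (fun ω => (Z ω, T ω, C ω)) P = ν ⊗ₘ (κT ×ₖ κC))
    (X : Ω → ℝ) (hX : ∀ ω, X ω = min (T ω) (C ω))
    (δ : Ω → ℝ) (hδ : ∀ ω, δ ω = if T ω ≤ C ω then 1 else 0)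
    (S : ℝ → ℝ)
    (hS : ∀ u, S u = ∫ ω, Real.exp (∑ j, β₀ j * Z ω j)
      * (if u ≤ X ω then (1:ℝ) else 0) ∂P)
    (g : ℝ → ℝ) (hgmeas : Measurable g) (hgbdd : ∃ Cg, ∀ x, |g x| ≤ Cg) :
    ∫ ω, δ ω * g (X ω) ∂P = ∫ u in Set.Ioi (0:ℝ), g u * α₀ u * S u := by
  have hA0m : Measurable A₀ := by
    have hmono : Monotone A₀ := fun x y hxy => by
      rcases le_total 0 y with hy | hy
      · rw [hA₀, hA₀]
        exact setIntegral_mono_set (hα₀int y hy) (Filter.Eventually.of_forall hα₀nn)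
          (Set.Ioc_subset_Ioc_right hxy).eventuallyLE
      · rw [hA₀, hA₀, Set.Ioc_eq_empty (not_lt.2 hy),
          Set.Ioc_eq_empty (not_lt.2 (hxy.trans hy))]
    exact hmono.measurable
  set e : (Fin p → ℝ) → ℝ := fun z => Real.exp (∑ j, β₀ j * z j) with he
  have hem : Measurable e := by fun_prop
  have hepos : ∀ z, 0 < e z := fun z => Real.exp_pos _
  have hsurv : ∀ z u, 0 ≤ u →
      κT z (Set.Ici u) = ENNReal.ofReal (Real.exp (-(A₀ u * e z))) := fun z u hu =>
    survival_cox hα₀nn hα₀meas hα₀int hA₀ hA0m (hepos z) (hκT z) hu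
  have hKm : ∀ (κ : Kernel (Fin p → ℝ) ℝ) [IsMarkovKernel κ],
      Measurable (fun q : (Fin p → ℝ) × ℝ => κ q.1 (Set.Ici q.2)) := fun κ _ =>
    Kernel.measurable_kernel_prodMk_left (κ := κ.comap Prod.fst measurable_fst)
      (t := {r : ((Fin p → ℝ) × ℝ) × ℝ | r.1.2 ≤ r.2})
      (measurableSet_le (by fun_prop) (by fun_prop))
  have hKT := hKm κT
  have hKC := hKm κC
  -- `S'` is the version of `S` with values in `[0, ∞]`.
  set S' : ℝ → ENNReal := fun u =>
    ∫⁻ z, ENNReal.ofReal (e z) * (κT z (Set.Ici u) * κC z (Set.Ici u)) ∂ν with hS'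
  have hS'm : Measurable S' := by
    refine Measurable.lintegral_prod_right' (f := fun q : ℝ × (Fin p → ℝ) =>
      ENNReal.ofReal (e q.2) * (κT q.2 (Set.Ici q.1) * κC q.2 (Set.Ici q.1))) ?_
    exact (hem.comp measurable_snd).ennreal_ofReal.mul
      ((hKT.comp measurable_swap).mul (hKC.comp measurable_swap))
  have hXm : Measurable X := by
    rw [show X = fun ω => min (T ω) (C ω) from funext hX]; exact hTmeas.min hCmeas
  have hTriple : Measurable (fun ω => (Z ω, T ω, C ω)) := hZmeas.prodMk (hTmeas.prodMk hCmeas)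
  have hSS' : ∀ u, S u = (S' u).toReal := by
    intro u
    rw [hS, integral_eq_lintegral_of_nonneg_ae]
    · congr 1
      have hD : MeasurableSet {q : (Fin p → ℝ) × ℝ × ℝ | u ≤ q.2.1 ∧ u ≤ q.2.2} := by
        have h1 : MeasurableSet {q : (Fin p → ℝ) × ℝ × ℝ | u ≤ q.2.1} :=
          measurableSet_le (by fun_prop) (by fun_prop)
        have h2 : MeasurableSet {q : (Fin p → ℝ) × ℝ × ℝ | u ≤ q.2.2} :=
          measurableSet_le (by fun_prop) (by fun_prop)
        exact h1.inter h2
      have hf : Measurable (fun q : (Fin p → ℝ) × ℝ × ℝ => ENNReal.ofReal (e q.1) *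
          (Set.indicator {q : (Fin p → ℝ) × ℝ × ℝ | u ≤ q.2.1 ∧ u ≤ q.2.2} 1 q)) :=
        (hem.comp measurable_fst).ennreal_ofReal.mul (measurable_one.indicator hD)
      have h1 : ∀ ω, ENNReal.ofReal (Real.exp (∑ j, β₀ j * Z ω j)
          * (if u ≤ X ω then (1:ℝ) else 0)) = (fun q : (Fin p → ℝ) × ℝ × ℝ =>
          ENNReal.ofReal (e q.1) *
          (Set.indicator {q : (Fin p → ℝ) × ℝ × ℝ | u ≤ q.2.1 ∧ u ≤ q.2.2} 1 q))
            (Z ω, T ω, C ω) := by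
        intro ω
        by_cases h : u ≤ T ω ∧ u ≤ C ω
        · simp [hX, h, he]
        · have h' : ¬ u ≤ X ω := by rw [hX, le_min_iff]; exact h
          simp [h, h']
      simp_rw [h1]
      rw [← lintegral_map hf hTriple, hlaw, Measure.lintegral_compProd hf]
      refine lintegral_congr fun z => ?_
      dsimp only
      have hD' : MeasurableSet (Set.Ici u ×ˢ Set.Ici u : Set (ℝ × ℝ)) :=
        measurableSet_Ici.prod measurableSet_Ici
      have h2 : ∀ b : ℝ × ℝ, Set.indicator {q : (Fin p → ℝ) × ℝ × ℝ | u ≤ q.2.1 ∧ u ≤ q.2.2}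
          (1 : (Fin p → ℝ) × ℝ × ℝ → ENNReal) (z, b) = Set.indicator (Set.Ici u ×ˢ Set.Ici u) 1 b :=
        fun b => by
        simp only [Set.indicator, Set.mem_prod, Set.mem_Ici, Set.mem_ofPred_eq, Pi.one_apply]
      simp_rw [h2]
      rw [lintegral_const_mul _ (measurable_one.indicator hD'), lintegral_indicator_one hD',
        Kernel.prod_apply, Measure.prod_prod]
    · refine Filter.Eventually.of_forall fun ω => ?_
      dsimp only
      split_ifs <;> simp [(Real.exp_pos _).le]
    · refine (Measurable.mul (by fun_prop) ?_).aestronglyMeasurable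
      exact Measurable.ite (measurableSet_le measurable_const hXm) measurable_const measurable_const
  have hdm : Measurable (fun u => ENNReal.ofReal (α₀ u) * S' u) :=
    hα₀meas.ennreal_ofReal.mul hS'm
  have hE : MeasurableSet {ω | T ω ≤ C ω} := measurableSet_le hTmeas hCmeas
  -- The law of `X` on the uncensored event.
  have key : (P.restrict {ω | T ω ≤ C ω}).map X
      = (volume.restrict (Set.Ioi (0:ℝ))).withDensity (fun u => ENNReal.ofReal (α₀ u) * S' u) := by
    ext s hs
    have hB : MeasurableSet {q : (Fin p → ℝ) × ℝ × ℝ | q.2.1 ≤ q.2.2 ∧ q.2.1 ∈ s} := by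
      have h1 : MeasurableSet {q : (Fin p → ℝ) × ℝ × ℝ | q.2.1 ≤ q.2.2} :=
        measurableSet_le (by fun_prop) (by fun_prop)
      exact h1.inter (hs.preimage (measurable_fst.comp measurable_snd))
    have hL : (P.restrict {ω | T ω ≤ C ω}).map X s
        = ∫⁻ z, ∫⁻ t, s.indicator (fun t => κC z (Set.Ici t)) t ∂(κT z) ∂ν := by
      rw [Measure.map_apply hXm hs, Measure.restrict_apply (hXm hs)]
      have h1 : X ⁻¹' s ∩ {ω | T ω ≤ C ω} = (fun ω => (Z ω, T ω, C ω)) ⁻¹'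
          {q : (Fin p → ℝ) × ℝ × ℝ | q.2.1 ≤ q.2.2 ∧ q.2.1 ∈ s} := by
        ext ω
        simp only [Set.mem_inter_iff, Set.mem_preimage, Set.mem_ofPred_eq, hX]
        constructor
        · rintro ⟨h, h'⟩; rw [min_eq_left h'] at h; exact ⟨h', h⟩
        · rintro ⟨h', h⟩; rw [min_eq_left h']; exact ⟨h, h'⟩
      rw [h1, ← Measure.map_apply hTriple hB, hlaw, Measure.compProd_apply hB]
      refine lintegral_congr fun z => ?_
      rw [Kernel.prod_apply' _ _ _ (measurable_prodMk_left hB)]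
      refine lintegral_congr fun t => ?_
      by_cases ht : t ∈ s
      · simp only [Set.indicator_of_mem ht]
        congr 1
        ext c
        simp [ht]
      · simp [ht]
    rw [hL, withDensity_apply _ hs, ← lintegral_indicator hs, ← lintegral_indicator measurableSet_Ioi]
    have hR : ∀ u, (Set.Ioi (0:ℝ)).indicator
        (s.indicator (fun u => ENNReal.ofReal (α₀ u) * S' u)) u
        = ∫⁻ z, (Set.Ioi (0:ℝ)).indicator (s.indicator (fun u => ENNReal.ofReal (α₀ u) *
          (ENNReal.ofReal (e z) * (κT z (Set.Ici u) * κC z (Set.Ici u))))) u ∂ν := by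
      intro u
      by_cases h1 : u ∈ Set.Ioi (0:ℝ)
      · by_cases h2 : u ∈ s
        · simp only [Set.indicator_of_mem h1, Set.indicator_of_mem h2, hS']
          rw [lintegral_const_mul]
          exact hem.ennreal_ofReal.mul ((hKT.comp measurable_prodMk_right).mul
            (hKC.comp measurable_prodMk_right))
        · simp [Set.indicator, h2]
      · have h1' : ¬ 0 < u := h1
        simp [Set.indicator, h1']
    refine Eq.trans ?_ (lintegral_congr fun u => (hR u).symm)
    rw [lintegral_lintegral_swap]
    · refine lintegral_congr fun z => ?_
      have hKz : Measurable (s.indicator fun t => κC z (Set.Ici t)) :=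
        (hKC.comp measurable_prodMk_left).indicator hs
      rw [hκT z, lintegral_withDensity_eq_lintegral_mul _ _ hKz]
      · refine lintegral_congr_ae ?_
        -- The density of `κT z` is supported on `[0, ∞)`; the endpoint `0` is a null set.
        have h0 : ∀ᵐ t : ℝ, t ≠ 0 := by simp [ae_iff]
        filter_upwards [h0] with t ht
        rw [← hκT z]
        by_cases h1 : 0 < t
        · by_cases h2 : t ∈ s
          · simp only [Pi.mul_apply, Set.indicator_of_mem (show t ∈ Set.Ioi (0:ℝ) from h1),
              Set.indicator_of_mem h2, if_pos h1.le]
            rw [hsurv z t h1.le, ENNReal.ofReal_mul (mul_nonneg (hα₀nn t) (Real.exp_pos _).le),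
              ENNReal.ofReal_mul (hα₀nn t)]
            simp only [mul_assoc, he]
          · simp [Set.indicator, h2]
        · have h3 : ¬ 0 ≤ t := fun h => h1 (lt_of_le_of_ne h ht.symm)
          simp [h1, h3]
      · refine Measurable.ennreal_ofReal (Measurable.ite measurableSet_Ici ?_ measurable_const)
        fun_prop
    · refine Measurable.aemeasurable ?_
      have : (Function.uncurry fun (u : ℝ) (z : Fin p → ℝ) => (Set.Ioi (0:ℝ)).indicator
          (s.indicator (fun u => ENNReal.ofReal (α₀ u) *
          (ENNReal.ofReal (e z) * (κT z (Set.Ici u) * κC z (Set.Ici u))))) u)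
          = (Prod.fst ⁻¹' (Set.Ioi (0:ℝ))).indicator ((Prod.fst ⁻¹' s).indicator
            (fun q : ℝ × (Fin p → ℝ) => ENNReal.ofReal (α₀ q.1) * (ENNReal.ofReal (e q.2) *
              (κT q.2 (Set.Ici q.1) * κC q.2 (Set.Ici q.1))))) := by
        funext q
        rfl
      rw [this]
      refine Measurable.indicator (Measurable.indicator ?_ (measurable_fst hs))
        (measurable_fst measurableSet_Ioi)
      exact (hα₀meas.comp measurable_fst).ennreal_ofReal.mul
        ((hem.comp measurable_snd).ennreal_ofReal.mul
          ((hKT.comp measurable_swap).mul (hKC.comp measurable_swap)))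
  have hfin : ∀ᵐ u ∂(volume.restrict (Set.Ioi (0:ℝ))), ENNReal.ofReal (α₀ u) * S' u < ⊤ := by
    refine ae_lt_top hdm ?_
    rw [← setLIntegral_univ, ← withDensity_apply _ MeasurableSet.univ, ← key]
    exact measure_ne_top _ _
  calc ∫ ω, δ ω * g (X ω) ∂P
      = ∫ ω in {ω | T ω ≤ C ω}, g (X ω) ∂P := by
        rw [← integral_indicator hE]
        refine integral_congr_ae (Filter.Eventually.of_forall fun ω => ?_)
        by_cases h : T ω ≤ C ω <;> simp [hδ, h]
    _ = ∫ x, g x ∂((P.restrict {ω | T ω ≤ C ω}).map X) :=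
        (integral_map hXm.aemeasurable hgmeas.aestronglyMeasurable).symm
    _ = ∫ u in Set.Ioi (0:ℝ), (ENNReal.ofReal (α₀ u) * S' u).toReal • g u := by
        rw [key, integral_withDensity_eq_integral_toReal_smul hdm hfin]
    _ = ∫ u in Set.Ioi (0:ℝ), g u * α₀ u * S u := by
        refine integral_congr_ae (Filter.Eventually.of_forall fun u => ?_)
        simp only [ENNReal.toReal_mul, ENNReal.toReal_ofReal (hα₀nn u), hSS', smul_eq_mul]
        ring
end

section
/- Let τ > 0, c_S > 0, ε ≥ 0, h > 0, let K : ℝ → ℝ be measurable and square-integrable, let x₁, …, x_n ∈ ℝ, d₁, …, d_n ∈ {0,1}, and let s₁, …, s_n and v₁, …, v_n be real numbers with s_i ≥ c_S, v_i ≥ c_S/2 and |v_i − s_i| ≤ ε for all i. Define α̂(t) = (1/n) Σ_i d_i K_h(t − x_i)/v_i and ᾱ(t) = (1/n) Σ_i d_i K_h(t − x_i)/s_i. Then ‖α̂ − ᾱ‖_{L²(0,τ)} ≤ 2 ε ‖K‖_{L²(ℝ)} / (c_S² √h). -/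
/-!
The difference of the two estimators is `(1/n) ∑ᵢ wᵢ K_h(t - xᵢ)` with
`wᵢ = dᵢ (sᵢ - vᵢ)/(vᵢ sᵢ)`, so that `|wᵢ| ≤ 2ε/c_S²`. By the Cauchy–Schwarz inequality its square
is at most `(2ε/c_S²)² (1/n) ∑ᵢ K_h(t - xᵢ)²`. Each `K_h(· - xᵢ)²` has integral `‖K‖²/h` over `ℝ`
(`integrable_rescale_sq`, `integral_rescale_sq`), so the average does too; enlarging `(0,τ]` to `ℝ`
and taking square roots gives the bound.
-/

open MeasureTheory

/-- The rescaled kernel `K_h(x) = (1/h) K(x/h)`. -/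
noncomputable def rescale (K : ℝ → ℝ) (h x : ℝ) : ℝ := (1 / h) * K (x / h)

lemma integrable_rescale_sq {K : ℝ → ℝ} {h : ℝ} (hh : 0 < h)
    (hK2 : Integrable (fun u => (K u) ^ 2)) (a : ℝ) :
    Integrable (fun t => (rescale K h (t - a)) ^ 2) := by
  have h1 := ((hK2.comp_div hh.ne').comp_sub_right a).const_mul ((1 / h) ^ 2)
  simpa only [rescale, mul_pow] using h1

lemma integral_rescale_sq (K : ℝ → ℝ) {h : ℝ} (hh : 0 < h) (a : ℝ) :
    ∫ t, (rescale K h (t - a)) ^ 2 = (∫ u, (K u) ^ 2) / h := by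
  rw [integral_sub_right_eq_self (fun t => (rescale K h t) ^ 2) a]
  simp only [rescale, mul_pow]
  rw [integral_const_mul, Measure.integral_comp_div (fun u => (K u) ^ 2) h, abs_of_pos hh,
    smul_eq_mul]
  field_simp

/-- Bound on the weight of one kernel in the difference of the two estimators. -/
lemma abs_weight_le {cS ε d s v : ℝ} (hcS : 0 < cS) (hd : d = 0 ∨ d = 1)
    (hs : cS ≤ s) (hv : cS / 2 ≤ v) (hvs : |v - s| ≤ ε) :
    |d / v - d / s| ≤ 2 * ε / cS ^ 2 := by
  have hε : 0 ≤ ε := (abs_nonneg _).trans hvs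
  have hs0 : 0 < s := by linarith
  have hv0 : 0 < v := by linarith
  rcases hd with rfl | rfl
  · simp only [zero_div, sub_self, abs_zero]
    positivity
  · have hvs' : cS / 2 * cS ≤ v * s := mul_le_mul hv hs hcS.le hv0.le
    calc |1 / v - 1 / s| = |v - s| / (v * s) := by
          rw [div_sub_div _ _ hv0.ne' hs0.ne', abs_div, abs_of_pos (mul_pos hv0 hs0), one_mul,
            mul_one, abs_sub_comm]
      _ ≤ ε / (cS / 2 * cS) := by gcongr
      _ = 2 * ε / cS ^ 2 := by field_simp

/-- A mean of numbers with weights bounded by `M` has square at most `M²` times the mean of the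
squares. -/
lemma sq_weighted_mean_le {n : ℕ} (hn : 0 < n) {M : ℝ} (w k : Fin n → ℝ) (hw : ∀ i, |w i| ≤ M) :
    ((1 / (n : ℝ)) * ∑ i, w i * k i) ^ 2 ≤ M ^ 2 / n * ∑ i, (k i) ^ 2 := by
  have hn' : (0 : ℝ) < n := by exact_mod_cast hn
  have h1 : (∑ i, w i * k i) ^ 2 ≤ n * ∑ i, (w i * k i) ^ 2 := by
    simpa using sq_sum_le_card_mul_sum_sq (s := Finset.univ) (f := fun i => w i * k i)
  have h2 : ∑ i, (w i * k i) ^ 2 ≤ M ^ 2 * ∑ i, (k i) ^ 2 := by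
    rw [Finset.mul_sum]
    refine Finset.sum_le_sum fun i _ => ?_
    rw [mul_pow, ← sq_abs (w i)]
    gcongr
    exact hw i
  calc ((1 / (n : ℝ)) * ∑ i, w i * k i) ^ 2
      = (1 / (n : ℝ)) ^ 2 * (∑ i, w i * k i) ^ 2 := mul_pow _ _ _
    _ ≤ (1 / (n : ℝ)) ^ 2 * (n * (M ^ 2 * ∑ i, (k i) ^ 2)) := by
        gcongr
        exact h1.trans (by gcongr)
    _ = M ^ 2 / n * ∑ i, (k i) ^ 2 := by field_simp

/-- Deterministic stability bound for the plug-in kernel estimator: if `sᵢ ≥ c_S`,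
`vᵢ ≥ c_S/2` and `|vᵢ - sᵢ| ≤ ε` for all `i`, then the `L²(0,τ)` distance between
`α̂(t) = (1/n) ∑ᵢ dᵢ K_h(t - xᵢ)/vᵢ` and `ᾱ(t) = (1/n) ∑ᵢ dᵢ K_h(t - xᵢ)/sᵢ` is at
most `2 ε ‖K‖_{L²(ℝ)} / (c_S² √h)`. -/
theorem plugin_stability_bound
    (τ cS ε h : ℝ) (hτ : 0 < τ) (hcS : 0 < cS) (hε : 0 ≤ ε) (hh : 0 < h)
    (K : ℝ → ℝ) (hKmeas : Measurable K) (hK2 : Integrable (fun u => (K u) ^ 2))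
    (n : ℕ) (hn : 0 < n)
    (x d s v : Fin n → ℝ)
    (hd : ∀ i, d i = 0 ∨ d i = 1)
    (hs : ∀ i, cS ≤ s i) (hv : ∀ i, cS / 2 ≤ v i)
    (hvs : ∀ i, |v i - s i| ≤ ε) :
    Real.sqrt (∫ t in Set.Ioc (0:ℝ) τ,
        ((1 / (n : ℝ)) * ∑ i, d i * rescale K h (t - x i) / v i
          - (1 / (n : ℝ)) * ∑ i, d i * rescale K h (t - x i) / s i) ^ 2)
      ≤ 2 * ε * Real.sqrt (∫ u, (K u) ^ 2) / (cS ^ 2 * Real.sqrt h) := by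
  have hn' : (0 : ℝ) < n := by exact_mod_cast hn
  set M : ℝ := 2 * ε / cS ^ 2 with hM
  have hM0 : 0 ≤ M := by positivity
  set G : ℝ → ℝ := fun t => M ^ 2 / n * ∑ i, (rescale K h (t - x i)) ^ 2 with hG
  have hG0 : ∀ t, 0 ≤ G t := fun t => by positivity
  have hGint : Integrable G :=
    (integrable_finsetSum _ fun i _ => integrable_rescale_sq hh hK2 (x i)).const_mul _
  have hGval : ∫ t, G t = M ^ 2 * ((∫ u, (K u) ^ 2) / h) := by
    rw [hG, integral_const_mul,
      integral_finsetSum _ fun i _ => integrable_rescale_sq hh hK2 (x i)]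
    simp only [integral_rescale_sq K hh, Finset.sum_const, Finset.card_univ, Fintype.card_fin,
      nsmul_eq_mul]
    field_simp
  have hpt : ∀ t, ((1 / (n : ℝ)) * ∑ i, d i * rescale K h (t - x i) / v i
      - (1 / (n : ℝ)) * ∑ i, d i * rescale K h (t - x i) / s i) ^ 2 ≤ G t := by
    intro t
    have e : (1 / (n : ℝ)) * ∑ i, d i * rescale K h (t - x i) / v i
        - (1 / (n : ℝ)) * ∑ i, d i * rescale K h (t - x i) / s i
        = (1 / (n : ℝ)) * ∑ i, (d i / v i - d i / s i) * rescale K h (t - x i) := by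
      rw [← mul_sub, ← Finset.sum_sub_distrib]
      congr 1
      exact Finset.sum_congr rfl fun i _ => by ring
    rw [e]
    exact sq_weighted_mean_le hn _ _ fun i => abs_weight_le hcS (hd i) (hs i) (hv i) (hvs i)
  have hle : ∫ t in Set.Ioc (0:ℝ) τ, ((1 / (n : ℝ)) * ∑ i, d i * rescale K h (t - x i) / v i
      - (1 / (n : ℝ)) * ∑ i, d i * rescale K h (t - x i) / s i) ^ 2
      ≤ M ^ 2 * ((∫ u, (K u) ^ 2) / h) := by
    rw [← hGval]
    refine le_trans ?_ (setIntegral_le_integral (s := Set.Ioc 0 τ) hGint (.of_forall hG0))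
    exact integral_mono_of_nonneg (.of_forall fun t => sq_nonneg _) hGint.integrableOn
      (.of_forall hpt)
  refine (Real.sqrt_le_sqrt hle).trans_eq ?_
  rw [Real.sqrt_mul (sq_nonneg M), Real.sqrt_sq hM0, Real.sqrt_div' _ hh.le, hM,
    div_mul_div_comm]
end
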